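/- Fix real α, β > −1, j ∈ ℕ with j ≥ 1, γ ∈ ℝ, M > 0, and a sequence M_n ≥ 0 with lim_{n→∞} M_n n^γ = M. Suppose γ > 2(α+2j+1), and let s > 0 satisfy g_α(s) = 0 and g_α(t) ≠ 0 for all t ∈ (0, s) (i.e., s is the smallest positive zero of g_α, equivalently the first positive zero of the Bessel function J_α). Then the largest real zero y_{n,1} of Q_n satisfies lim_{n→∞} n·√(2(1 − y_{n,1})) = s. -/

import Mathlib

open Polynomial Filter

/-- The Jacobi polynomial `P_n^{(α,β)}` as a real polynomial. -/
noncomputable def jacobiP (α β : ℝ) (n : ℕ) : Polynomial ℝ :=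
  ∑ k ∈ Finset.range (n + 1),
    Polynomial.C (Real.Gamma (n + α + 1) / (Real.Gamma ((n : ℝ) - k + 1) * Real.Gamma (α + k + 1)) *
        (Real.Gamma (n + β + 1) / (Real.Gamma ((k : ℝ) + 1) * Real.Gamma ((n : ℝ) - k + β + 1)))) *
      (Polynomial.C (2⁻¹ : ℝ) * (Polynomial.X - 1)) ^ k *
      (Polynomial.C (2⁻¹ : ℝ) * (Polynomial.X + 1)) ^ (n - k)

/-- The squared Jacobi norm `‖P_n^{(α,β)}‖²`. -/
noncomputable def jacobiNormSq (α β : ℝ) (n : ℕ) : ℝ :=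
  ∫ x in (-1 : ℝ)..1, (jacobiP α β n).eval x ^ 2 * (1 - x) ^ α * (1 + x) ^ β

/-- The kernel `K_n^{(j,k)}(x,y)`. -/
noncomputable def kernK (α β : ℝ) (j k n : ℕ) (x y : ℝ) : ℝ :=
  ∑ i ∈ Finset.range (n + 1),
    (Polynomial.derivative^[j] (jacobiP α β i)).eval x *
      (Polynomial.derivative^[k] (jacobiP α β i)).eval y / jacobiNormSq α β i

/-- The kernel `K_n^{(j,0)}(1,·)` as a polynomial. -/
noncomputable def kernKPoly (α β : ℝ) (j n : ℕ) : Polynomial ℝ :=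
  ∑ i ∈ Finset.range (n + 1),
    Polynomial.C ((Polynomial.derivative^[j] (jacobiP α β i)).eval 1 / jacobiNormSq α β i) *
      jacobiP α β i

/-- The varying Sobolev inner product `(f,g)_{S,n}` with mass `m`. -/
noncomputable def sobInner (α β : ℝ) (j : ℕ) (m : ℝ) (f g : Polynomial ℝ) : ℝ :=
  (∫ x in (-1 : ℝ)..1, f.eval x * g.eval x * (1 - x) ^ α * (1 + x) ^ β) +
    m * (Polynomial.derivative^[j] f).eval 1 * (Polynomial.derivative^[j] g).eval 1

/-- The Jacobi–Sobolev orthogonal polynomial `Q_n`. -/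
noncomputable def sobQ (α β : ℝ) (j : ℕ) (Ms : ℕ → ℝ) (n : ℕ) : Polynomial ℝ :=
  jacobiP α β n -
    Polynomial.C (Ms n * (Polynomial.derivative^[j] (jacobiP α β n)).eval 1 /
        (1 + Ms n * kernK α β j j (n - 1) 1 1)) *
      kernKPoly α β j (n - 1)

/-- The entire function `g_ν(z) = ∑ (-1)^k (z/2)^{2k}/(k! Γ(k+ν+1))`, so that
`J_ν(x) = (x/2)^ν g_ν(x)`. -/
noncomputable def besselG (ν : ℝ) (z : ℂ) : ℂ :=
  ∑' k : ℕ, (-1) ^ k / ((Nat.factorial k : ℂ) * Complex.Gamma ((k : ℂ) + (ν : ℂ) + 1)) *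
    (z / 2) ^ (2 * k)


noncomputable def jb (α : ℝ) (k : ℕ) : ℝ := ∏ i ∈ Finset.range k, (((i : ℝ) + 1) * (α + 1 + i))⁻¹

noncomputable def je (α β : ℝ) (n k : ℕ) : ℝ :=
  ∏ i ∈ Finset.range k, (((n : ℝ) - i) * (n + (α + β + 1) + i))

noncomputable def jA (α : ℝ) (n : ℕ) : ℝ :=
  Real.Gamma (n + α + 1) / ((n.factorial : ℝ) * Real.Gamma (α + 1))

noncomputable def jh (α β : ℝ) (n : ℕ) (u : ℝ) : ℝ :=
  ∑ k ∈ Finset.range (n + 1), je α β n k * jb α k * u ^ k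

lemma Gamma_rise (x : ℝ) (hx : 0 < x) (k : ℕ) :
    Real.Gamma (x + k) = Real.Gamma x * ∏ i ∈ Finset.range k, (x + i) := by
  induction k with
  | zero => simp
  | succ k ih =>
    rw [Finset.prod_range_succ, ← mul_assoc, ← ih]
    push_cast
    rw [← add_assoc, Real.Gamma_add_one (by positivity), mul_comm]

lemma prod_desc (n k : ℕ) (hk : k ≤ n) :
    (∏ i ∈ Finset.range k, ((n : ℝ) - i)) * ((n - k).factorial : ℝ) = n.factorial := by
  induction k with
  | zero => simp
  | succ k ih =>
    rw [Finset.prod_range_succ, ← ih (by omega)]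
    have h : n - k = (n - (k + 1)) + 1 := by omega
    rw [h, Nat.factorial_succ, ← h]
    push_cast [Nat.cast_sub (show k ≤ n by omega)]
    ring

lemma vand (m : ℕ) : ∀ (a b : ℝ), 0 < a → (m : ℝ) < b →
    ∑ k ∈ Finset.range (m + 1), (m.choose k : ℝ) / (Real.Gamma (a + k) * Real.Gamma (b - k)) =
      (∏ i ∈ Finset.range m, (a + b - 1 + i)) / (Real.Gamma (a + m) * Real.Gamma b) := by
  induction m with
  | zero => intro a b ha hb; simp
  | succ m ih =>
    intro a b ha hb
    push_cast at hb
    have hm : (0 : ℝ) ≤ m := Nat.cast_nonneg m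
    have h1 := ih a b ha (by linarith)
    have h2 := ih (a + 1) (b - 1) (by linarith) (by linarith)
    rw [Finset.sum_range_succ']
    have : ∀ k ∈ Finset.range (m + 1), ((m + 1).choose (k + 1) : ℝ) /
        (Real.Gamma (a + ((k + 1 : ℕ) : ℝ)) * Real.Gamma (b - ((k + 1 : ℕ) : ℝ))) =
        (m.choose k : ℝ) / (Real.Gamma (a + 1 + k) * Real.Gamma (b - 1 - k)) +
        (m.choose (k + 1) : ℝ) / (Real.Gamma (a + ((k + 1 : ℕ) : ℝ)) * Real.Gamma (b - ((k + 1 : ℕ) : ℝ))) := by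
      intro k _
      rw [Nat.choose_succ_succ]
      push_cast
      rw [add_div]
      congr 3 <;> ring_nf
    rw [Finset.sum_congr rfl this, Finset.sum_add_distrib, h2, add_assoc]
    have e3 : ∑ x ∈ Finset.range (m + 1), (m.choose (x + 1) : ℝ) / (Real.Gamma (a + ((x + 1 : ℕ) : ℝ)) * Real.Gamma (b - ((x + 1 : ℕ) : ℝ)))
       + ((m + 1).choose 0 : ℝ) / (Real.Gamma (a + ((0 : ℕ) : ℝ)) * Real.Gamma (b - ((0 : ℕ) : ℝ))) =
       (∏ i ∈ Finset.range m, (a + b - 1 + i)) / (Real.Gamma (a + m) * Real.Gamma b) := by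
      rw [← h1, Finset.sum_range_succ, Finset.sum_range_succ' _ m]
      simp
    rw [e3, Finset.prod_range_succ]
    have hb1 : Real.Gamma b = (b - 1) * Real.Gamma (b - 1) := by
      have := Real.Gamma_add_one (s := b - 1) (by linarith)
      rwa [sub_add_cancel] at this
    have ha1 : Real.Gamma (a + ((m + 1 : ℕ) : ℝ)) = (a + m) * Real.Gamma (a + m) := by
      push_cast
      rw [← add_assoc, Real.Gamma_add_one (by positivity)]
    have ha2 : Real.Gamma (a + 1 + m) = (a + m) * Real.Gamma (a + m) := by
      rw [← ha1]; push_cast; ring_nf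
    have hp : ∏ i ∈ Finset.range m, (a + 1 + (b - 1) - 1 + (i : ℝ)) = ∏ i ∈ Finset.range m, (a + b - 1 + (i : ℝ)) := by
      apply Finset.prod_congr rfl; intros; ring
    rw [ha1, ha2, hb1, hp]
    have g1 : Real.Gamma (a + m) ≠ 0 := (Real.Gamma_pos_of_pos (by positivity)).ne'
    have g2 : Real.Gamma (b - 1) ≠ 0 := (Real.Gamma_pos_of_pos (by linarith)).ne'
    have g3 : a + m ≠ 0 := by positivity
    have g4 : b - 1 ≠ 0 := by linarith
    field_simp
    ring

lemma jb_eq (α : ℝ) (hα : -1 < α) (k : ℕ) :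
    jb α k = Real.Gamma (α + 1) / ((k.factorial : ℝ) * Real.Gamma (α + 1 + k)) := by
  have g1 : Real.Gamma (α + 1) ≠ 0 := (Real.Gamma_pos_of_pos (by linarith)).ne'
  induction k with
  | zero => simp [jb, g1]
  | succ k ih =>
    have g3 : α + 1 + k ≠ 0 := by have := Nat.cast_nonneg (α := ℝ) k; linarith
    rw [jb, Finset.prod_range_succ, ← jb, ih, Nat.factorial_succ]
    push_cast
    rw [← add_assoc, Real.Gamma_add_one g3]
    have g2 : Real.Gamma (α + 1 + k) ≠ 0 :=
      (Real.Gamma_pos_of_pos (by have := Nat.cast_nonneg (α := ℝ) k; linarith)).ne'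
    field_simp

lemma coeff_identity (α β : ℝ) (hα : -1 < α) (hβ : -1 < β) (n m : ℕ) (hm : m ≤ n) :
    ∑ k ∈ Finset.range (m + 1),
      (Real.Gamma (n + α + 1) / (Real.Gamma ((n : ℝ) - k + 1) * Real.Gamma (α + k + 1)) *
        (Real.Gamma (n + β + 1) / (Real.Gamma ((k : ℝ) + 1) * Real.Gamma ((n : ℝ) - k + β + 1)))) *
        ((n - k).choose (m - k) : ℝ) = jA α n * (je α β n m * jb α m) := by
  have hmn : (m : ℝ) ≤ n := by exact_mod_cast hm
  have hv := vand m (α + 1) (n + β + 1) (by linarith) (by linarith)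
  have hterm : ∀ k ∈ Finset.range (m + 1),
      (Real.Gamma (n + α + 1) / (Real.Gamma ((n : ℝ) - k + 1) * Real.Gamma (α + k + 1)) *
        (Real.Gamma (n + β + 1) / (Real.Gamma ((k : ℝ) + 1) * Real.Gamma ((n : ℝ) - k + β + 1)))) *
        ((n - k).choose (m - k) : ℝ) =
      (Real.Gamma (n + α + 1) * Real.Gamma (n + β + 1) / ((n - m).factorial * m.factorial)) *
       ((m.choose k : ℝ) / (Real.Gamma (α + 1 + k) * Real.Gamma (n + β + 1 - k))) := by
    intro k hk
    have hkm : k ≤ m := by simpa [Nat.lt_succ_iff] using hk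
    have hkn : (k : ℝ) ≤ n := by exact_mod_cast hkm.trans hm
    have e1 : Real.Gamma ((n : ℝ) - k + 1) = (n - k).factorial := by
      rw [← Real.Gamma_nat_eq_factorial, Nat.cast_sub (hkm.trans hm)]
    have e2 : α + k + 1 = α + 1 + k := by ring
    have e3 : (n : ℝ) - k + β + 1 = n + β + 1 - k := by ring
    rw [e1, Real.Gamma_nat_eq_factorial, e2, e3]
    rw [Nat.cast_choose ℝ hkm, Nat.cast_choose ℝ (show m - k ≤ n - k by omega)]
    rw [show n - k - (m - k) = n - m by omega]
    have g1 : Real.Gamma (α + 1 + k) ≠ 0 :=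
      (Real.Gamma_pos_of_pos (by have := Nat.cast_nonneg (α := ℝ) k; linarith)).ne'
    have g2 : Real.Gamma (n + β + 1 - k) ≠ 0 := (Real.Gamma_pos_of_pos (by linarith)).ne'
    have f1 : ∀ q : ℕ, (q.factorial : ℝ) ≠ 0 := fun q => by positivity
    have := f1 (n - k); have := f1 (n - m); have := f1 k; have := f1 m; have := f1 (m - k)
    field_simp
  rw [Finset.sum_congr rfl hterm, ← Finset.mul_sum, hv, jb_eq α hα, jA, je, Finset.prod_mul_distrib,
    ← prod_desc n m hm]
  have g1 : Real.Gamma (α + 1 + m) ≠ 0 :=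
      (Real.Gamma_pos_of_pos (by have := Nat.cast_nonneg (α := ℝ) m; linarith)).ne'
  have g2 : Real.Gamma (n + β + 1) ≠ 0 := (Real.Gamma_pos_of_pos (by have := Nat.cast_nonneg (α := ℝ) n; linarith)).ne'
  have g3 : Real.Gamma (α + 1) ≠ 0 := (Real.Gamma_pos_of_pos (by linarith)).ne'
  have hp : ∏ i ∈ Finset.range m, (α + 1 + (n + β + 1) - 1 + (i : ℝ)) =
      ∏ i ∈ Finset.range m, ((n : ℝ) + (α + β + 1) + i) := by
    apply Finset.prod_congr rfl; intros; ring
  have f0 : (∏ i ∈ Finset.range m, ((n : ℝ) - i)) ≠ 0 := by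
    apply Finset.prod_ne_zero_iff.mpr
    intro i hi
    have : (i : ℝ) < n := by exact_mod_cast (Finset.mem_range.mp hi).trans_le hm
    linarith
  have f1 : ∀ q : ℕ, (q.factorial : ℝ) ≠ 0 := fun q => by positivity
  have := f1 (n - m); have := f1 m
  rw [hp]
  field_simp

lemma jacobiP_eval (α β : ℝ) (hα : -1 < α) (hβ : -1 < β) (n : ℕ) (u : ℝ) :
    (jacobiP α β n).eval (1 + 2 * u) = jA α n * jh α β n u := by
  rw [jacobiP, Polynomial.eval_finsetSum, jh, Finset.mul_sum]
  set c : ℕ → ℝ := fun k => (Real.Gamma (n + α + 1) / (Real.Gamma ((n : ℝ) - k + 1) * Real.Gamma (α + k + 1)) *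
        (Real.Gamma (n + β + 1) / (Real.Gamma ((k : ℝ) + 1) * Real.Gamma ((n : ℝ) - k + β + 1)))) with hc
  have h1 : ∀ k ∈ Finset.range (n + 1),
     eval (1 + 2 * u) (C (c k) * (C (2⁻¹ : ℝ) * (X - 1)) ^ k * (C (2⁻¹ : ℝ) * (X + 1)) ^ (n - k)) =
     ∑ l ∈ Finset.range (n + 1 - k), (c k * ((n - k).choose l : ℝ) * u ^ (k + l)) := by
    intro k hk
    have hk' : k ≤ n := by simpa [Nat.lt_succ_iff] using hk
    simp only [eval_mul, eval_C, eval_pow, eval_sub, eval_add, eval_X, eval_one]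
    rw [show (2⁻¹ : ℝ) * (1 + 2 * u - 1) = u by ring, show (2⁻¹ : ℝ) * (1 + 2 * u + 1) = u + 1 by ring,
      add_pow, Finset.mul_sum, show n + 1 - k = n - k + 1 by omega]
    apply Finset.sum_congr rfl
    intro l _
    rw [one_pow, pow_add]; ring
  rw [Finset.sum_congr rfl h1,
    ← Finset.sum_range_diag_flip (n + 1) (fun k l => c k * ((n - k).choose l : ℝ) * u ^ (k + l))]
  apply Finset.sum_congr rfl
  intro m hm
  have hm' : m ≤ n := by simpa [Nat.lt_succ_iff] using hm
  rw [← mul_assoc, ← coeff_identity α β hα hβ n m hm', Finset.sum_mul]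
  apply Finset.sum_congr rfl
  intro k hk
  have hk' : k ≤ m := by simpa [Nat.lt_succ_iff] using hk
  rw [show k + (m - k) = m by omega]

lemma jacobiP_eq (α β : ℝ) (hα : -1 < α) (hβ : -1 < β) (n : ℕ) :
    jacobiP α β n = ∑ k ∈ Finset.range (n + 1),
      C (jA α n * (je α β n k * jb α k) * 2⁻¹ ^ k) * (X - C 1) ^ k := by
  apply Polynomial.funext
  intro x
  have := jacobiP_eval α β hα hβ n ((x - 1) / 2)
  rw [show 1 + 2 * ((x - 1) / 2) = x by ring] at this
  rw [this, jh, Finset.mul_sum, Polynomial.eval_finsetSum]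
  apply Finset.sum_congr rfl
  intro k _
  simp only [eval_mul, eval_C, eval_pow, eval_sub, eval_X]
  rw [div_eq_mul_inv, mul_pow]; ring

lemma je_eq_zero (α β : ℝ) (n k : ℕ) (h : n < k) : je α β n k = 0 := by
  apply Finset.prod_eq_zero (Finset.mem_range.mpr h)
  simp

lemma jacobiP_deriv (α β : ℝ) (hα : -1 < α) (hβ : -1 < β) (n j : ℕ) :
    (derivative^[j] (jacobiP α β n)).eval 1 =
      jA α n * (je α β n j * jb α j) * 2⁻¹ ^ j * j.factorial := by
  rw [jacobiP_eq α β hα hβ, iterate_derivative_sum, eval_finsetSum]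
  have h1 : ∀ k ∈ Finset.range (n + 1),
     eval 1 (derivative^[j] (C (jA α n * (je α β n k * jb α k) * 2⁻¹ ^ k) * (X - C 1) ^ k)) =
     if k = j then jA α n * (je α β n j * jb α j) * 2⁻¹ ^ j * j.factorial else 0 := by
    intro k _
    rw [iterate_derivative_C_mul, iterate_derivative_X_sub_pow]
    split_ifs with h
    · subst h; simp [Nat.descFactorial_self]
    · rcases lt_or_gt_of_ne h with h | h
      · rw [Nat.descFactorial_of_lt h]; simp
      · have : k - j ≠ 0 := by omega
        simp [this]
  rw [Finset.sum_congr rfl h1, Finset.sum_ite_eq']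
  split_ifs with h
  · rfl
  · rw [je_eq_zero α β n j (by simpa using h)]; simp

noncomputable def wt (α β v : ℝ) : ℝ := v ^ α * (1 - v) ^ β

lemma wt_complex (α β : ℝ) {v : ℝ} (hv : v ∈ Set.uIcc (0 : ℝ) 1) :
    (v : ℂ) ^ (((α + 1 : ℝ) : ℂ) - 1) * (1 - (v : ℂ)) ^ (((β + 1 : ℝ) : ℂ) - 1) = ((wt α β v : ℝ) : ℂ) := by
  rw [Set.uIcc_of_le zero_le_one] at hv
  rw [wt, Complex.ofReal_mul, Complex.ofReal_cpow hv.1, Complex.ofReal_cpow (by linarith [hv.2])]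
  push_cast
  simp

lemma wt_int (α β : ℝ) (hα : -1 < α) (hβ : -1 < β) :
    IntervalIntegrable (wt α β) MeasureTheory.volume 0 1 := by
  have h := Complex.betaIntegral_convergent (u := ((α + 1 : ℝ) : ℂ)) (v := ((β + 1 : ℝ) : ℂ))
    (by rw [Complex.ofReal_re]; linarith) (by rw [Complex.ofReal_re]; linarith)
  have h2 : IntervalIntegrable (fun v : ℝ => ((wt α β v : ℝ) : ℂ)) MeasureTheory.volume 0 1 :=
    h.congr (fun v hv => wt_complex α β (Set.uIoc_subset_uIcc hv))
  have := h2.norm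
  rw [intervalIntegrable_iff] at h2 ⊢
  exact h2.re

lemma wt_integral (α β : ℝ) (hα : -1 < α) (hβ : -1 < β) :
    ∫ v in (0 : ℝ)..1, wt α β v = Real.Gamma (α + 1) * Real.Gamma (β + 1) / Real.Gamma (α + 1 + (β + 1)) := by
  have h := Complex.betaIntegral_eq_Gamma_mul_div ((α + 1 : ℝ) : ℂ) ((β + 1 : ℝ) : ℂ)
    (by rw [Complex.ofReal_re]; linarith) (by rw [Complex.ofReal_re]; linarith)
  rw [Complex.betaIntegral, intervalIntegral.integral_congr (fun v hv => wt_complex α β hv),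
    intervalIntegral.integral_ofReal, ← Complex.ofReal_add, Complex.Gamma_ofReal, Complex.Gamma_ofReal,
    Complex.Gamma_ofReal] at h
  exact_mod_cast h

lemma wt_mom (α β : ℝ) (hα : -1 < α) (hβ : -1 < β) (k q : ℕ) :
    ∫ v in (0 : ℝ)..1, v ^ k * (1 - v) ^ q * wt α β v =
     Real.Gamma (α + 1 + k) * Real.Gamma (β + 1 + q) / Real.Gamma (α + β + 1 + 1 + q + k) := by
  have hk := Nat.cast_nonneg (α := ℝ) k
  have hq := Nat.cast_nonneg (α := ℝ) q
  have h := wt_integral (α + k) (β + q) (by linarith) (by linarith)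
  rw [show α + 1 + k = α + k + 1 by ring, show β + 1 + q = β + q + 1 by ring,
    show α + β + 1 + 1 + q + k = α + k + 1 + (β + q + 1) by ring, ← h]
  apply intervalIntegral.integral_congr_Ioo_of_le zero_le_one
  intro v hv
  have h1 : v ≠ 0 := hv.1.ne'
  have h2 : 1 - v ≠ 0 := by linarith [hv.2]
  simp only [wt]
  rw [Real.rpow_add_natCast h1, Real.rpow_add_natCast h2]
  ring

lemma poly_int (α β : ℝ) (hα : -1 < α) (hβ : -1 < β) (f : ℝ → ℝ) (hf : Continuous f) :
    IntervalIntegrable (fun v => f v * wt α β v) MeasureTheory.volume 0 1 :=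
  (wt_int α β hα hβ).continuousOn_mul hf.continuousOn

lemma fdiff (n : ℕ) : ∀ (p r : ℝ), 0 < p → 0 < r →
    ∑ k ∈ Finset.range (n + 1), (-1) ^ k * (n.choose k : ℝ) * (Real.Gamma (p + k) / Real.Gamma (r + k)) =
      Real.Gamma p * (∏ i ∈ Finset.range n, (r - p + i)) / Real.Gamma (r + n) := by
  induction n with
  | zero => intro p r hp hr; simp
  | succ m ih =>
    intro p r hp hr
    have hm : (0 : ℝ) ≤ m := Nat.cast_nonneg m
    have h1 := ih p r hp hr
    have h2 := ih (p + 1) (r + 1) (by linarith) (by linarith)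
    rw [Finset.sum_range_succ']
    have : ∀ k ∈ Finset.range (m + 1), (-1) ^ (k + 1) * ((m + 1).choose (k + 1) : ℝ) *
        (Real.Gamma (p + ((k + 1 : ℕ) : ℝ)) / Real.Gamma (r + ((k + 1 : ℕ) : ℝ))) =
        - ((-1) ^ k * (m.choose k : ℝ) * (Real.Gamma (p + 1 + k) / Real.Gamma (r + 1 + k))) +
        (-1) ^ (k + 1) * (m.choose (k + 1) : ℝ) *
        (Real.Gamma (p + ((k + 1 : ℕ) : ℝ)) / Real.Gamma (r + ((k + 1 : ℕ) : ℝ))) := by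
      intro k _
      rw [Nat.choose_succ_succ]
      push_cast
      rw [show p + 1 + (k : ℝ) = p + (k + 1) by ring, show r + 1 + (k : ℝ) = r + (k + 1) by ring]
      ring
    rw [Finset.sum_congr rfl this, Finset.sum_add_distrib, Finset.sum_neg_distrib, h2, add_assoc]
    have e3 : ∑ x ∈ Finset.range (m + 1), (-1) ^ (x + 1) * (m.choose (x + 1) : ℝ) *
        (Real.Gamma (p + ((x + 1 : ℕ) : ℝ)) / Real.Gamma (r + ((x + 1 : ℕ) : ℝ)))
       + (-1) ^ 0 * ((m + 1).choose 0 : ℝ) * (Real.Gamma (p + ((0 : ℕ) : ℝ)) / Real.Gamma (r + ((0 : ℕ) : ℝ))) =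
       Real.Gamma p * (∏ i ∈ Finset.range m, (r - p + i)) / Real.Gamma (r + m) := by
      rw [← h1, Finset.sum_range_succ, Finset.sum_range_succ' _ m]
      simp
    rw [e3, Finset.prod_range_succ]
    have ha1 : Real.Gamma (r + ((m + 1 : ℕ) : ℝ)) = (r + m) * Real.Gamma (r + m) := by
      push_cast
      rw [← add_assoc, Real.Gamma_add_one (by positivity)]
    have ha2 : Real.Gamma (r + 1 + m) = (r + m) * Real.Gamma (r + m) := by
      rw [← ha1]; push_cast; ring_nf
    have hpp : ∏ i ∈ Finset.range m, (r + 1 - (p + 1) + (i : ℝ)) = ∏ i ∈ Finset.range m, (r - p + (i : ℝ)) := by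
      apply Finset.prod_congr rfl; intros; ring
    rw [ha1, ha2, hpp, Real.Gamma_add_one hp.ne']
    have g1 : Real.Gamma (r + m) ≠ 0 := (Real.Gamma_pos_of_pos (by positivity)).ne'
    have g3 : r + m ≠ 0 := by positivity
    field_simp
    ring

lemma jejb_eq (α β : ℝ) (hα : -1 < α) (hβ : -1 < β) (n : ℕ) (hn : 1 ≤ n) (k : ℕ) (hk : k ≤ n) :
    je α β n k * jb α k = (n.choose k : ℝ) * (Real.Gamma (n + (α + β + 1) + k) * Real.Gamma (α + 1) /
      (Real.Gamma (n + (α + β + 1)) * Real.Gamma (α + 1 + k))) := by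
  have hn' : (1 : ℝ) ≤ n := by exact_mod_cast hn
  have hk' := Nat.cast_nonneg (α := ℝ) k
  rw [jb_eq α hα, je, Finset.prod_mul_distrib, Gamma_rise (n + (α + β + 1)) (by linarith) k,
    Nat.cast_choose ℝ hk, ← prod_desc n k hk]
  have g1 : Real.Gamma (α + 1 + k) ≠ 0 := (Real.Gamma_pos_of_pos (by linarith)).ne'
  have g2 : Real.Gamma (n + (α + β + 1)) ≠ 0 := (Real.Gamma_pos_of_pos (by linarith)).ne'
  field_simp

lemma jh_cont (α β : ℝ) (n : ℕ) : Continuous (jh α β n) := by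
  unfold jh
  fun_prop

lemma jh_mom (α β : ℝ) (hα : -1 < α) (hβ : -1 < β) (n : ℕ) (hn : 1 ≤ n) (q : ℕ) :
    ∫ v in (0 : ℝ)..1, jh α β n (-v) * (1 - v) ^ q * wt α β v =
      Real.Gamma (β + 1 + q) * Real.Gamma (α + 1) *
        (∏ i ∈ Finset.range n, ((q : ℝ) + 1 - n + i)) / Real.Gamma (α + β + 1 + 1 + q + n) := by
  have hn' : (1 : ℝ) ≤ n := by exact_mod_cast hn
  have hq := Nat.cast_nonneg (α := ℝ) q
  have h1 : ∀ v : ℝ, jh α β n (-v) * (1 - v) ^ q * wt α β v =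
      ∑ k ∈ Finset.range (n + 1), ((-1) ^ k * (je α β n k * jb α k)) * (v ^ k * (1 - v) ^ q * wt α β v) := by
    intro v
    rw [jh, Finset.sum_mul, Finset.sum_mul]
    apply Finset.sum_congr rfl
    intro k _
    rw [neg_pow]; ring
  simp_rw [h1]
  rw [intervalIntegral.integral_finsetSum]
  swap
  · intro k _
    exact (poly_int α β hα hβ (fun v => v ^ k * (1 - v) ^ q) (by fun_prop)).const_mul _
  simp_rw [intervalIntegral.integral_const_mul]
  have h2 : ∀ k ∈ Finset.range (n + 1), ((-1) ^ k * (je α β n k * jb α k)) *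
      (∫ v in (0 : ℝ)..1, v ^ k * (1 - v) ^ q * wt α β v) =
      (Real.Gamma (β + 1 + q) * Real.Gamma (α + 1) / Real.Gamma (n + (α + β + 1))) *
      ((-1) ^ k * (n.choose k : ℝ) * (Real.Gamma (n + (α + β + 1) + k) / Real.Gamma (α + β + 1 + 1 + q + k))) := by
    intro k hk
    have hk' : k ≤ n := by simpa [Nat.lt_succ_iff] using hk
    have hk0 := Nat.cast_nonneg (α := ℝ) k
    rw [wt_mom α β hα hβ, jejb_eq α β hα hβ n hn k hk']
    have g1 : Real.Gamma (α + 1 + k) ≠ 0 := (Real.Gamma_pos_of_pos (by linarith)).ne'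
    field_simp
  rw [Finset.sum_congr rfl h2, ← Finset.mul_sum, fdiff n _ _ (by linarith) (by linarith)]
  have g2 : Real.Gamma (n + (α + β + 1)) ≠ 0 := (Real.Gamma_pos_of_pos (by linarith)).ne'
  have hp : ∏ i ∈ Finset.range n, (α + β + 1 + 1 + q - (n + (α + β + 1)) + (i : ℝ)) =
    ∏ i ∈ Finset.range n, ((q : ℝ) + 1 - n + i) := by
    apply Finset.prod_congr rfl; intros; ring
  rw [hp]
  field_simp

lemma jh_mom_zero (α β : ℝ) (hα : -1 < α) (hβ : -1 < β) (n : ℕ) (hn : 1 ≤ n) (q : ℕ) (hq : q < n) :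
    ∫ v in (0 : ℝ)..1, jh α β n (-v) * (1 - v) ^ q * wt α β v = 0 := by
  rw [jh_mom α β hα hβ n hn]
  have : ∏ i ∈ Finset.range n, ((q : ℝ) + 1 - n + i) = 0 := by
    apply Finset.prod_eq_zero (i := n - 1 - q) (Finset.mem_range.mpr (by omega))
    rw [Nat.cast_sub (by omega), Nat.cast_sub hn]
    push_cast; ring
  rw [this]; simp

lemma jh_mom_n (α β : ℝ) (hα : -1 < α) (hβ : -1 < β) (n : ℕ) (hn : 1 ≤ n) :
    ∫ v in (0 : ℝ)..1, jh α β n (-v) * (1 - v) ^ n * wt α β v =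
      Real.Gamma (β + 1 + n) * Real.Gamma (α + 1) * n.factorial / Real.Gamma (n + (α + β + 1) + n + 1) := by
  rw [jh_mom α β hα hβ n hn]
  have : ∏ i ∈ Finset.range n, ((n : ℝ) + 1 - n + i) = n.factorial := by
    rw [← Finset.prod_range_add_one_eq_factorial]
    push_cast
    apply Finset.prod_congr rfl; intros; ring
  rw [this]
  congr 2; ring

lemma jh_mom_neg (α β : ℝ) (hα : -1 < α) (hβ : -1 < β) (n : ℕ) (hn : 1 ≤ n) (k : ℕ) (hk : k ≤ n) :
    ∫ v in (0 : ℝ)..1, jh α β n (-v) * (-v) ^ k * wt α β v =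
      if k = n then ∫ v in (0 : ℝ)..1, jh α β n (-v) * (1 - v) ^ n * wt α β v else 0 := by
  have h1 : ∀ v : ℝ, jh α β n (-v) * (-v) ^ k * wt α β v =
      ∑ q ∈ Finset.range (k + 1), ((-1) ^ (k - q) * (k.choose q : ℝ)) * (jh α β n (-v) * (1 - v) ^ q * wt α β v) := by
    intro v
    rw [show -v = (1 - v) + (-1) by ring, add_pow, Finset.mul_sum, Finset.sum_mul]
    apply Finset.sum_congr rfl
    intro q _
    ring
  have hc := jh_cont α β n
  simp_rw [h1]
  rw [intervalIntegral.integral_finsetSum]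
  swap
  · intro q _
    exact (poly_int α β hα hβ (fun v => jh α β n (-v) * (1 - v) ^ q) (by fun_prop)).const_mul _
  simp_rw [intervalIntegral.integral_const_mul]
  rw [Finset.sum_range_succ, Finset.sum_eq_zero]
  · split_ifs with h
    · subst h; simp
    · rw [jh_mom_zero α β hα hβ n hn k (by omega)]; simp
  · intro q hq
    rw [Finset.mem_range] at hq
    rw [jh_mom_zero α β hα hβ n hn q (by omega)]; simp

lemma jh_sq (α β : ℝ) (hα : -1 < α) (hβ : -1 < β) (n : ℕ) (hn : 1 ≤ n) :
    ∫ v in (0 : ℝ)..1, jh α β n (-v) ^ 2 * wt α β v =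
      je α β n n * jb α n * (Real.Gamma (β + 1 + n) * Real.Gamma (α + 1) * n.factorial /
        Real.Gamma (n + (α + β + 1) + n + 1)) := by
  have hc := jh_cont α β n
  have h1 : ∀ v : ℝ, jh α β n (-v) ^ 2 * wt α β v =
      ∑ k ∈ Finset.range (n + 1), (je α β n k * jb α k) * (jh α β n (-v) * (-v) ^ k * wt α β v) := by
    intro v
    rw [sq]
    nth_rewrite 2 [jh]
    rw [Finset.mul_sum, Finset.sum_mul]
    apply Finset.sum_congr rfl
    intro k _
    ring
  simp_rw [h1]
  rw [intervalIntegral.integral_finsetSum]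
  swap
  · intro k _
    exact (poly_int α β hα hβ (fun v => jh α β n (-v) * (-v) ^ k) (by fun_prop)).const_mul _
  simp_rw [intervalIntegral.integral_const_mul]
  rw [Finset.sum_range_succ, Finset.sum_eq_zero, jh_mom_neg α β hα hβ n hn n le_rfl, if_pos rfl,
    jh_mom_n α β hα hβ n hn, zero_add]
  intro k hk
  rw [Finset.mem_range] at hk
  rw [jh_mom_neg α β hα hβ n hn k hk.le, if_neg hk.ne, mul_zero]

lemma normSq_eq (α β : ℝ) (hα : -1 < α) (hβ : -1 < β) (n : ℕ) :
    jacobiNormSq α β n = 2 * 2 ^ α * 2 ^ β * jA α n ^ 2 * ∫ v in (0 : ℝ)..1, jh α β n (-v) ^ 2 * wt α β v := by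
  have h := intervalIntegral.integral_comp_sub_mul (a := 0) (b := 1)
    (fun x : ℝ => (jacobiP α β n).eval x ^ 2 * (1 - x) ^ α * (1 + x) ^ β) (two_ne_zero (α := ℝ)) 1
  norm_num at h
  rw [jacobiNormSq, ← intervalIntegral.integral_const_mul]
  have h' : ∫ x in (-1 : ℝ)..1, eval x (jacobiP α β n) ^ 2 * (1 - x) ^ α * (1 + x) ^ β =
     2 * (∫ x in (0 : ℝ)..1, eval (1 - 2 * x) (jacobiP α β n) ^ 2 * (2 * x) ^ α * (1 + (1 - 2 * x)) ^ β) := by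
    rw [h]; ring
  rw [h', ← intervalIntegral.integral_const_mul]
  apply intervalIntegral.integral_congr
  intro v hv
  rw [Set.uIcc_of_le zero_le_one] at hv
  simp only
  rw [show 1 - 2 * v = 1 + 2 * (-v) by ring, jacobiP_eval α β hα hβ, Real.mul_rpow (by norm_num) hv.1,
    show 1 + (1 + 2 * (-v)) = 2 * (1 - v) by ring, Real.mul_rpow (by norm_num) (by linarith [hv.2]), wt]
  ring

lemma normSq_nonneg (α β : ℝ) (n : ℕ) : 0 ≤ jacobiNormSq α β n := by
  rw [jacobiNormSq]
  apply intervalIntegral.integral_nonneg (by norm_num)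
  intro x hx
  have h1 : 0 ≤ 1 - x := by linarith [hx.2]
  have h2 : 0 ≤ 1 + x := by linarith [hx.1]
  positivity

lemma jA_pos (α : ℝ) (hα : -1 < α) (n : ℕ) : 0 < jA α n := by
  have hn := Nat.cast_nonneg (α := ℝ) n
  have := Real.Gamma_pos_of_pos (show 0 < n + α + 1 by linarith)
  have := Real.Gamma_pos_of_pos (show 0 < α + 1 by linarith)
  rw [jA]; positivity

/-- the ratio `A_n^2/‖P_n‖²`. -/
lemma ratio_eq (α β : ℝ) (hα : -1 < α) (hβ : -1 < β) (n : ℕ) (hn : 1 ≤ n) :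
    jA α n ^ 2 / jacobiNormSq α β n =
      (2 * 2 ^ α * 2 ^ β * Real.Gamma (α + 1) ^ 2)⁻¹ * ((2 * n + (α + β + 1)) *
        (Real.Gamma (n + (α + β + 1)) * Real.Gamma (n + α + 1) / (Real.Gamma (n + β + 1) * n.factorial))) := by
  have hn' : (1 : ℝ) ≤ n := by exact_mod_cast hn
  rw [normSq_eq α β hα hβ, jh_sq α β hα hβ n hn, jejb_eq α β hα hβ n hn n le_rfl, Nat.choose_self,
    Real.Gamma_add_one (show (n : ℝ) + (α + β + 1) + n ≠ 0 by linarith)]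
  have := (jA_pos α hα n).ne'
  have g1 := (Real.Gamma_pos_of_pos (show 0 < α + 1 by linarith)).ne'
  have g2 := (Real.Gamma_pos_of_pos (show 0 < n + (α + β + 1) by linarith)).ne'
  have g3 := (Real.Gamma_pos_of_pos (show 0 < n + (α + β + 1) + n by linarith)).ne'
  have g4 := (Real.Gamma_pos_of_pos (show 0 < n + α + 1 by linarith)).ne'
  have g5 := (Real.Gamma_pos_of_pos (show 0 < n + β + 1 by linarith)).ne'
  have g6 : (n : ℝ) + (α + β + 1) + n ≠ 0 := by linarith
  have g7 : (2 : ℝ) ^ α ≠ 0 := by positivity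
  have g8 : (2 : ℝ) ^ β ≠ 0 := by positivity
  rw [show α + 1 + (n : ℝ) = n + α + 1 by ring, show β + 1 + (n : ℝ) = n + β + 1 by ring,
    show 2 * (n : ℝ) + (α + β + 1) = n + (α + β + 1) + n by ring]
  push_cast
  field_simp

noncomputable def jT (α β : ℝ) (n : ℕ) : ℝ :=
  Real.Gamma (n + 1 + (α + β + 1)) * Real.Gamma (n + 1 + α + 1) /
    (Real.Gamma (n + 1 + β) * n.factorial)

noncomputable def jr (α β : ℝ) (n : ℕ) : ℝ := (2 * n + (α + β + 1)) *
        (Real.Gamma (n + (α + β + 1)) * Real.Gamma (n + α + 1) / (Real.Gamma (n + β + 1) * n.factorial))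

lemma jT_nonneg (α β : ℝ) (hα : -1 < α) (hβ : -1 < β) (n : ℕ) : 0 ≤ jT α β n := by
  have hn := Nat.cast_nonneg (α := ℝ) n
  have g1 := (Real.Gamma_pos_of_pos (show 0 < n + 1 + (α + β + 1) by linarith))
  have g2 := (Real.Gamma_pos_of_pos (show 0 < n + 1 + α + 1 by linarith))
  have g3 := (Real.Gamma_pos_of_pos (show 0 < n + 1 + β by linarith))
  rw [jT]; positivity

lemma jT_succ (α β : ℝ) (hα : -1 < α) (hβ : -1 < β) (n : ℕ) :
    jT α β (n + 1) = jT α β n + (α + 1) * jr α β (n + 1) := by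
  have hn := Nat.cast_nonneg (α := ℝ) n
  have g1 := (Real.Gamma_pos_of_pos (show 0 < n + 1 + (α + β + 1) by linarith)).ne'
  have g2 := (Real.Gamma_pos_of_pos (show 0 < n + 1 + α + 1 by linarith)).ne'
  have g3 := (Real.Gamma_pos_of_pos (show 0 < n + 1 + β by linarith)).ne'
  rw [jT, jT, jr, Nat.factorial_succ]
  push_cast
  rw [show (n : ℝ) + 1 + 1 + (α + β + 1) = n + 1 + (α + β + 1) + 1 by ring,
    show (n : ℝ) + 1 + 1 + α + 1 = n + 1 + α + 1 + 1 by ring,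
    show (n : ℝ) + 1 + 1 + β = n + 1 + β + 1 by ring,
    Real.Gamma_add_one (show (n : ℝ) + 1 + (α + β + 1) ≠ 0 by linarith),
    Real.Gamma_add_one (show (n : ℝ) + 1 + α + 1 ≠ 0 by linarith),
    Real.Gamma_add_one (show (n : ℝ) + 1 + β ≠ 0 by linarith)]
  have h1 : (n : ℝ) + 1 + β ≠ 0 := by linarith
  field_simp
  ring

lemma jr_sum (α β : ℝ) (hα : -1 < α) (hβ : -1 < β) (n : ℕ) :
    (α + 1) * ∑ i ∈ Finset.range n, jr α β (i + 1) ≤ jT α β n := by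
  induction n with
  | zero => simpa using jT_nonneg α β hα hβ 0
  | succ n ih => rw [Finset.sum_range_succ, jT_succ α β hα hβ]; linarith

noncomputable def jR (α β : ℝ) (n : ℕ) : ℝ := jA α n ^ 2 / jacobiNormSq α β n

lemma jR_nonneg (α β : ℝ) (n : ℕ) : 0 ≤ jR α β n :=
  div_nonneg (sq_nonneg _) (normSq_nonneg α β n)

lemma jR_sum (α β : ℝ) (hα : -1 < α) (hβ : -1 < β) : ∃ κ : ℝ, ∀ n : ℕ,
    ∑ i ∈ Finset.range n, jR α β i ≤ jR α β 0 + κ * jT α β n := by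
  refine ⟨(2 * 2 ^ α * 2 ^ β * Real.Gamma (α + 1) ^ 2)⁻¹ * (α + 1)⁻¹, fun n => ?_⟩
  have h0 : ∑ i ∈ Finset.range n, jR α β i ≤ ∑ i ∈ Finset.range (n + 1), jR α β i := by
    rw [Finset.sum_range_succ]; linarith [jR_nonneg α β n]
  refine h0.trans ?_
  rw [Finset.sum_range_succ', add_comm]
  gcongr
  have h1 : ∀ i ∈ Finset.range n, jR α β (i + 1) =
      (2 * 2 ^ α * 2 ^ β * Real.Gamma (α + 1) ^ 2)⁻¹ * jr α β (i + 1) := by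
    intro i _
    rw [jR, ratio_eq α β hα hβ (i + 1) (by omega), jr]
  rw [Finset.sum_congr rfl h1, ← Finset.mul_sum, mul_assoc _ (α + 1)⁻¹]
  have g0 := Real.Gamma_pos_of_pos (show 0 < α + 1 by linarith)
  refine mul_le_mul_of_nonneg_left ?_ (by positivity)
  rw [inv_mul_eq_div]
  exact (le_div_iff₀' (show 0 < α + 1 by linarith)).2 (jr_sum α β hα hβ n)

lemma Gamma_ratio (s : ℝ) (hs : 0 < s) :
    Tendsto (fun n : ℕ => Real.Gamma (n + 1 + s) / (n.factorial * (n : ℝ) ^ s)) atTop (nhds 1) := by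
  have g := (Real.Gamma_pos_of_pos hs).ne'
  have h := (Real.GammaSeq_tendsto_Gamma s).inv₀ g
  have h2 := h.const_mul (Real.Gamma s)
  rw [mul_inv_cancel₀ g] at h2
  refine h2.congr fun n => ?_
  rw [Real.GammaSeq, inv_div, show (n : ℝ) + 1 + s = s + (n + 1 : ℕ) by push_cast; ring,
    Gamma_rise s hs]
  ring

lemma lin_ratio (a b : ℝ) :
    Tendsto (fun n : ℕ => ((n : ℝ) + a) / (n + b)) atTop (nhds 1) := by
  have h1 : ∀ c : ℝ, Tendsto (fun n : ℕ => 1 + c * ((n : ℝ))⁻¹) atTop (nhds 1) := fun c => by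
    have := (tendsto_inv_atTop_nhds_zero_nat (𝕜 := ℝ)).const_mul c
    have := this.const_add 1
    simpa using this
  have h := (h1 a).div (h1 b) one_ne_zero
  rw [div_one] at h
  refine h.congr' ?_
  filter_upwards [eventually_gt_atTop 0] with n hn
  have : (n : ℝ) ≠ 0 := by positivity
  simp only [Pi.div_apply]
  rw [show 1 + a * (n : ℝ)⁻¹ = (n + a) * (n : ℝ)⁻¹ by field_simp,
    show 1 + b * (n : ℝ)⁻¹ = (n + b) * (n : ℝ)⁻¹ by field_simp]
  rw [mul_div_mul_right _ _ (by positivity)]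

lemma jT_lim (α β : ℝ) (hα : -1 < α) (hβ : -1 < β) :
    Tendsto (fun n : ℕ => jT α β n / (n : ℝ) ^ (2 * α + 2)) atTop (nhds 1) := by
  have h1 := Gamma_ratio (α + 1) (by linarith)
  have h2 := Gamma_ratio (α + β + 1 + 1) (by linarith)
  have h3 := Gamma_ratio (β + 1) (by linarith)
  have h4 := lin_ratio (1 + β) (1 + (α + β + 1))
  have h := ((h1.mul h2).div h3 one_ne_zero).mul h4
  norm_num at h
  refine h.congr' ?_
  filter_upwards [eventually_gt_atTop 0] with n hn
  have hn0 : (0 : ℝ) < n := by positivity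
  have hn1 : (1 : ℝ) ≤ n := by exact_mod_cast hn
  rw [jT]
  have g1 := (Real.Gamma_pos_of_pos (show 0 < n + 1 + (α + β + 1) by linarith)).ne'
  have g2 := (Real.Gamma_pos_of_pos (show 0 < n + 1 + α + 1 by linarith)).ne'
  have g3 := (Real.Gamma_pos_of_pos (show 0 < n + 1 + β by linarith)).ne'
  rw [show (n : ℝ) + 1 + (α + β + 1 + 1) = n + 1 + (α + β + 1) + 1 by ring,
    show (n : ℝ) + 1 + (α + 1) = n + 1 + α + 1 by ring,
    show (n : ℝ) + 1 + (β + 1) = n + 1 + β + 1 by ring,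
    Real.Gamma_add_one (show (n : ℝ) + 1 + (α + β + 1) ≠ 0 by linarith),
    Real.Gamma_add_one (show (n : ℝ) + 1 + β ≠ 0 by linarith),
    show (2 * α + 2) = (α + 1) + (α + β + 1 + 1) - (β + 1) by ring,
    Real.rpow_sub hn0, Real.rpow_add hn0 (α + 1) (α + β + 1 + 1)]
  have h1 : (n : ℝ) + 1 + β ≠ 0 := by linarith
  have h2 : (n : ℝ) + 1 + (α + β + 1) ≠ 0 := by linarith
  rw [show (n : ℝ) + (1 + β) = n + 1 + β by ring, show (n : ℝ) + (1 + (α + β + 1)) = n + 1 + (α + β + 1) by ring]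
  have p1 : (n : ℝ) ^ (α + 1) ≠ 0 := by positivity
  have p2 : (n : ℝ) ^ (β + 1) ≠ 0 := by positivity
  have p3 : (n : ℝ) ^ (α + β + 1 + 1) ≠ 0 := by positivity
  field_simp

lemma je_succ (α β : ℝ) (n k : ℕ) :
    je α β n (k + 1) = je α β n k * (((n : ℝ) - k) * (n + (α + β + 1) + k)) := by
  rw [je, Finset.prod_range_succ, ← je]

lemma je_nonneg (α β : ℝ) (hα : -1 < α) (hβ : -1 < β) (n k : ℕ) : 0 ≤ je α β n k := by
  induction k with
  | zero => simp [je]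
  | succ k ih =>
    rcases lt_or_ge k n with h | h
    · have h1 : (k : ℝ) + 1 ≤ n := by exact_mod_cast h
      have h2 := Nat.cast_nonneg (α := ℝ) k
      rw [je_succ]
      refine mul_nonneg ih (mul_nonneg ?_ ?_) <;> linarith
    · rw [je_eq_zero _ _ _ _ (by omega)]

lemma je_mono (α β : ℝ) (hα : -1 < α) (hβ : -1 < β) (i n k : ℕ) (hi : i ≤ n) :
    je α β i k ≤ je α β n k := by
  induction k with
  | zero => simp [je]
  | succ k ih =>
    rcases lt_or_ge k i with h | h
    · have h1 : (k : ℝ) + 1 ≤ i := by exact_mod_cast h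
      have h2 := Nat.cast_nonneg (α := ℝ) k
      have h3 : (i : ℝ) ≤ n := by exact_mod_cast hi
      rw [je_succ, je_succ]
      refine mul_le_mul ih (mul_le_mul ?_ ?_ ?_ ?_) (mul_nonneg ?_ ?_) (je_nonneg α β hα hβ n k) <;> linarith
    · rw [je_eq_zero _ _ _ _ (show i < k + 1 by omega)]
      exact je_nonneg α β hα hβ n _

noncomputable def jD (α β : ℝ) : ℝ := 2 + |α + β + 1|

lemma jD_pos (α β : ℝ) : 0 < jD α β := by unfold jD; positivity

lemma je_le (α β : ℝ) (hα : -1 < α) (hβ : -1 < β) (n k : ℕ) :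
    je α β n k ≤ (jD α β * (n : ℝ) ^ 2) ^ k := by
  have hD := jD_pos α β
  induction k with
  | zero => simp [je]
  | succ k ih =>
    rcases lt_or_ge k n with h | h
    · have h1 : (k : ℝ) + 1 ≤ n := by exact_mod_cast h
      have h2 := Nat.cast_nonneg (α := ℝ) k
      rw [je_succ, pow_succ]
      refine mul_le_mul ih ?_ (mul_nonneg ?_ ?_) (by positivity)
      · have ha : (n : ℝ) + (α + β + 1) + k ≤ jD α β * n := by
          unfold jD
          have := le_abs_self (α + β + 1)
          have := abs_nonneg (α + β + 1)
          nlinarith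
        have hb : (n : ℝ) - k ≤ n := by linarith
        calc ((n : ℝ) - k) * (n + (α + β + 1) + k) ≤ n * (jD α β * n) :=
              mul_le_mul hb ha (by linarith) (by linarith)
          _ = _ := by ring
      all_goals linarith
    · rw [je_eq_zero _ _ _ _ (show n < k + 1 by omega)]; positivity

lemma je_lim (α β : ℝ) (k : ℕ) :
    Tendsto (fun n : ℕ => je α β n k / ((n : ℝ) ^ 2) ^ k) atTop (nhds 1) := by
  induction k with
  | zero => simp [je]
  | succ k ih =>
    have h1 := lin_ratio (-k) 0
    have h2 := lin_ratio (α + β + 1 + k) 0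
    have := ih.mul (h1.mul h2)
    norm_num at this
    refine this.congr fun n => ?_
    rw [je_succ, pow_succ ((n : ℝ) ^ 2) k, mul_div_mul_comm]
    congr 1
    rw [div_mul_div_comm]
    congr 1 <;> ring

lemma jb_pos (α : ℝ) (hα : -1 < α) (k : ℕ) : 0 < jb α k := by
  apply Finset.prod_pos
  intro i _
  have := Nat.cast_nonneg (α := ℝ) i
  exact inv_pos.mpr (mul_pos (by linarith) (by linarith))

lemma jb_succ (α : ℝ) (k : ℕ) : jb α (k + 1) = jb α k * (((k : ℝ) + 1) * (α + 1 + k))⁻¹ := by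
  rw [jb, Finset.prod_range_succ, ← jb]

lemma jb_le (α : ℝ) (hα : -1 < α) (k : ℕ) : jb α k ≤ ((α + 1)⁻¹) ^ k / k.factorial := by
  have h0 : 0 < α + 1 := by linarith
  induction k with
  | zero => simp [jb]
  | succ k ih =>
    have hk := Nat.cast_nonneg (α := ℝ) k
    rw [jb_succ, Nat.factorial_succ, pow_succ, mul_inv]
    push_cast
    calc jb α k * (((k : ℝ) + 1)⁻¹ * (α + 1 + k)⁻¹) ≤
        ((α + 1)⁻¹ ^ k / k.factorial) * (((k : ℝ) + 1)⁻¹ * (α + 1)⁻¹) := by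
          refine mul_le_mul ih ?_ (by positivity) (by positivity)
          refine mul_le_mul_of_nonneg_left ?_ (by positivity)
          exact inv_anti₀ h0 (by linarith)
      _ = _ := by
        have : (k : ℝ) + 1 ≠ 0 := by positivity
        field_simp

lemma jb_summable (α : ℝ) (hα : -1 < α) (r : ℝ) (hr : 0 ≤ r) : Summable (fun k => jb α k * r ^ k) := by
  refine Summable.of_nonneg_of_le (fun k => mul_nonneg (jb_pos α hα k).le (by positivity)) (fun k => ?_)
    (Real.summable_pow_div_factorial ((α + 1)⁻¹ * r))
  have := jb_le α hα k
  calc jb α k * r ^ k ≤ ((α + 1)⁻¹) ^ k / k.factorial * r ^ k := by gcongr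
    _ = _ := by rw [mul_pow]; ring

lemma jh_ext (α β : ℝ) (i N : ℕ) (h : i < N) (u : ℝ) :
    jh α β i u = ∑ k ∈ Finset.range N, je α β i k * jb α k * u ^ k := by
  rw [jh]
  apply Finset.sum_subset (Finset.range_mono (by omega))
  intro k _ hk
  rw [je_eq_zero _ _ _ _ (by simpa using hk)]; simp

lemma jh_abs_le (α β : ℝ) (hα : -1 < α) (hβ : -1 < β) (i n : ℕ) (hi : i ≤ n) (u : ℝ) :
    |jh α β i u| ≤ jh α β n |u| := by
  rw [jh_ext α β i (n + 1) (by omega), jh]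
  refine (Finset.abs_sum_le_sum_abs _ _).trans (Finset.sum_le_sum fun k _ => ?_)
  have h1 := je_nonneg α β hα hβ i k
  have h2 := (jb_pos α hα k).le
  rw [abs_mul, abs_mul, abs_of_nonneg h1, abs_of_nonneg h2, abs_pow]
  have := je_mono α β hα hβ i n k hi
  gcongr

lemma jh_le_B (α β : ℝ) (hα : -1 < α) (hβ : -1 < β) (n : ℕ) (hn : 1 ≤ n) (t T : ℝ) (ht : |t| ≤ T) :
    jh α β n |(-t / (n : ℝ) ^ 2)| ≤ ∑' k, jb α k * (jD α β * T) ^ k := by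
  have hn' : (0 : ℝ) < n := by exact_mod_cast hn
  have hD := jD_pos α β
  have hT : 0 ≤ T := (abs_nonneg t).trans ht
  rw [jh]
  refine le_trans (Finset.sum_le_sum fun k _ => ?_)
    ((jb_summable α hα (jD α β * T) (by positivity)).sum_le_tsum _
      (fun k _ => mul_nonneg (jb_pos α hα k).le (by positivity)))
  have h1 := je_le α β hα hβ n k
  have h2 := (jb_pos α hα k).le
  rw [abs_div, abs_neg, abs_of_nonneg (show 0 ≤ (n : ℝ) ^ 2 by positivity)]
  calc je α β n k * jb α k * (|t| / (n : ℝ) ^ 2) ^ k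
      ≤ (jD α β * (n : ℝ) ^ 2) ^ k * jb α k * (T / (n : ℝ) ^ 2) ^ k := by gcongr
    _ = _ := by
      rw [mul_comm (_ ^ k) (jb α k), mul_assoc, ← mul_pow]
      congr 2
      field_simp

noncomputable def jG (α : ℝ) (t : ℝ) : ℝ := ∑' k, (-1) ^ k * jb α k * t ^ k

lemma jG_summable (α : ℝ) (hα : -1 < α) (t : ℝ) : Summable (fun k => (-1) ^ k * jb α k * t ^ k) := by
  refine Summable.of_norm_bounded (jb_summable α hα |t| (abs_nonneg t)) fun k => ?_
  rw [norm_mul, norm_mul, norm_pow, norm_pow, norm_neg, norm_one, one_pow, one_mul,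
    Real.norm_of_nonneg (jb_pos α hα k).le, Real.norm_eq_abs]

noncomputable def jdel (α β : ℝ) (T : ℝ) (n : ℕ) : ℝ :=
  ∑' k, |je α β n k / ((n : ℝ) ^ 2) ^ k - 1| * (jb α k * T ^ k)

lemma jdel_bound (α β : ℝ) (hα : -1 < α) (hβ : -1 < β) (T : ℝ) (hT : 0 ≤ T) (n : ℕ) (hn : 1 ≤ n) (k : ℕ) :
    |je α β n k / ((n : ℝ) ^ 2) ^ k - 1| * (jb α k * T ^ k) ≤ jb α k * (jD α β * T) ^ k + jb α k * T ^ k := by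
  have hn' : (0 : ℝ) < n := by exact_mod_cast hn
  have hD := jD_pos α β
  have h1 := je_le α β hα hβ n k
  have h0 := je_nonneg α β hα hβ n k
  have h2 := (jb_pos α hα k).le
  have h3 : je α β n k / ((n : ℝ) ^ 2) ^ k ≤ jD α β ^ k := by
    rw [div_le_iff₀ (by positivity), ← mul_pow]; exact h1
  have h4 : 0 ≤ je α β n k / ((n : ℝ) ^ 2) ^ k := by positivity
  have h5 : |je α β n k / ((n : ℝ) ^ 2) ^ k - 1| ≤ jD α β ^ k + 1 := by
    rw [abs_le]; constructor <;> nlinarith [pow_pos hD k]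
  calc _ ≤ (jD α β ^ k + 1) * (jb α k * T ^ k) := by gcongr
    _ = _ := by rw [mul_pow]; ring

lemma jdel_bsum (α β : ℝ) (hα : -1 < α) (T : ℝ) (hT : 0 ≤ T) :
    Summable (fun k => jb α k * (jD α β * T) ^ k + jb α k * T ^ k) :=
  (jb_summable α hα _ (mul_nonneg (jD_pos α β).le hT)).add (jb_summable α hα T hT)

lemma jdel_lim (α β : ℝ) (hα : -1 < α) (hβ : -1 < β) (T : ℝ) (hT : 0 ≤ T) :
    Tendsto (jdel α β T) atTop (nhds 0) := by
  have h := tendsto_tsum_of_dominated_convergence (𝓕 := atTop)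
    (f := fun (n : ℕ) (k : ℕ) => |je α β n k / ((n : ℝ) ^ 2) ^ k - 1| * (jb α k * T ^ k))
    (g := fun _ => (0 : ℝ)) (jdel_bsum α β hα T hT) ?_ ?_
  · simp only [tsum_zero] at h
    exact h
  · intro k
    have := (((je_lim α β k).sub_const 1).abs).mul_const (jb α k * T ^ k)
    simpa using this
  · filter_upwards [eventually_ge_atTop 1] with n hn k
    have := (jb_pos α hα k).le
    rw [Real.norm_of_nonneg (by positivity)]
    exact jdel_bound α β hα hβ T hT n hn k

lemma jh_close (α β : ℝ) (hα : -1 < α) (hβ : -1 < β) (n : ℕ) (hn : 1 ≤ n) (t T : ℝ) (ht : |t| ≤ T) :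
    |jh α β n (-t / (n : ℝ) ^ 2) - jG α t| ≤ jdel α β T n := by
  have hn' : (0 : ℝ) < n := by exact_mod_cast hn
  have hT : 0 ≤ T := (abs_nonneg t).trans ht
  have h1 : HasSum (fun k => je α β n k * jb α k * (-t / (n : ℝ) ^ 2) ^ k) (jh α β n (-t / (n : ℝ) ^ 2)) := by
    apply hasSum_sum_of_ne_finset_zero
    intro k hk
    rw [je_eq_zero _ _ _ _ (by simpa using hk)]; simp
  have h2 := h1.sub (jG_summable α hα t).hasSum
  have h3 : Summable (fun k => |je α β n k / ((n : ℝ) ^ 2) ^ k - 1| * (jb α k * T ^ k)) := by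
    refine Summable.of_nonneg_of_le (fun k => ?_) (jdel_bound α β hα hβ T hT n hn) (jdel_bsum α β hα T hT)
    have := (jb_pos α hα k).le
    positivity
  rw [jG, ← h2.tsum_eq, ← Real.norm_eq_abs]
  refine tsum_of_norm_bounded h3.hasSum fun k => ?_
  have hb := (jb_pos α hα k).le
  have : je α β n k * jb α k * (-t / (n : ℝ) ^ 2) ^ k - (-1) ^ k * jb α k * t ^ k =
     (je α β n k / ((n : ℝ) ^ 2) ^ k - 1) * (jb α k * (-t) ^ k) := by
    rw [div_pow, neg_pow]; ring
  rw [this, Real.norm_eq_abs, abs_mul, abs_mul, abs_pow, abs_neg, abs_of_nonneg hb]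
  gcongr

lemma ps_summable (c : ℕ → ℝ) (hc : ∀ r : ℝ, 0 ≤ r → Summable fun k => |c k| * r ^ k) (r : ℝ) (hr : 0 ≤ r) :
    Summable fun k : ℕ => |((k : ℝ) + 1) * c (k + 1)| * r ^ k := by
  refine Summable.of_nonneg_of_le (fun k => by positivity) (fun k => ?_)
    ((summable_nat_add_iff 1).2 (hc (2 * (r + 1)) (by positivity)))
  have h1 : ((k : ℝ) + 1) ≤ 2 ^ (k + 1) := by
    exact_mod_cast (Nat.lt_two_pow_self (n := k + 1)).le
  have h2 : r ^ k ≤ (r + 1) ^ (k + 1) := by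
    calc r ^ k ≤ (r + 1) ^ k := by gcongr; linarith
      _ ≤ (r + 1) ^ (k + 1) := pow_le_pow_right₀ (by linarith) (by omega)
  rw [abs_mul, abs_of_nonneg (show 0 ≤ (k : ℝ) + 1 by positivity), mul_pow]
  calc ((k : ℝ) + 1) * |c (k + 1)| * r ^ k ≤ 2 ^ (k + 1) * |c (k + 1)| * (r + 1) ^ (k + 1) := by gcongr
    _ = _ := by ring

lemma ps_summable' (c : ℕ → ℝ) (hc : ∀ r : ℝ, 0 ≤ r → Summable fun k => |c k| * r ^ k) (t : ℝ) :
    Summable fun k => c k * t ^ k := by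
  refine Summable.of_norm_bounded (hc |t| (abs_nonneg t)) fun k => ?_
  rw [norm_mul, norm_pow, Real.norm_eq_abs, Real.norm_eq_abs]

lemma ps_deriv (c : ℕ → ℝ) (hc : ∀ r : ℝ, 0 ≤ r → Summable fun k => |c k| * r ^ k) (t : ℝ) :
    HasDerivAt (fun z => ∑' k, c k * z ^ k) (∑' k : ℕ, ((k : ℝ) + 1) * c (k + 1) * t ^ k) t := by
  set R := |t| + 1 with hR
  have hR0 : 0 < R := by positivity
  have hu : Summable (fun k : ℕ => |c k| * (k * R ^ (k - 1))) := by
    rw [← summable_nat_add_iff 1]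
    refine (ps_summable c hc R hR0.le).congr fun k => ?_
    rw [abs_mul, abs_of_nonneg (show 0 ≤ (k : ℝ) + 1 by positivity)]
    push_cast
    ring
  have hb : ∀ (k : ℕ) (y : ℝ), y ∈ Metric.ball (0 : ℝ) R → ‖c k * (k * y ^ (k - 1))‖ ≤ |c k| * (k * R ^ (k - 1)) := by
    intro k y hy
    have hy' : |y| ≤ R := by
      rw [mem_ball_zero_iff, Real.norm_eq_abs] at hy; exact hy.le
    rw [norm_mul, norm_mul, norm_pow, Real.norm_eq_abs, Real.norm_eq_abs, Real.norm_eq_abs, Nat.abs_cast]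
    gcongr
  have ht : t ∈ Metric.ball (0 : ℝ) R := by
    rw [mem_ball_zero_iff, Real.norm_eq_abs, hR]; linarith
  have h := hasDerivAt_tsum_of_isPreconnected (g := fun k z => c k * z ^ k)
    (g' := fun k y => c k * (k * y ^ (k - 1))) hu Metric.isOpen_ball
    (convex_ball (0 : ℝ) R).isPreconnected (fun k y _ => (hasDerivAt_pow k y).const_mul (c k)) hb
    (Metric.mem_ball_self hR0) (ps_summable' c hc 0) ht
  have hs : Summable (fun k : ℕ => c k * (k * t ^ (k - 1))) :=
    Summable.of_norm_bounded hu fun k => hb k t ht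
  rw [hs.tsum_eq_zero_add] at h
  convert! h using 1
  simp only [Nat.cast_zero, zero_mul, mul_zero, zero_add]
  apply tsum_congr
  intro k
  push_cast
  ring

noncomputable def jcf (α : ℝ) (k : ℕ) : ℝ := (-1) ^ k * jb α k

lemma jcf_sum (α : ℝ) (hα : -1 < α) (r : ℝ) (hr : 0 ≤ r) : Summable fun k => |jcf α k| * r ^ k := by
  refine (jb_summable α hα r hr).congr fun k => ?_
  rw [jcf, abs_mul, abs_pow, abs_neg, abs_one, one_pow, one_mul, abs_of_nonneg (jb_pos α hα k).le]

noncomputable def jG1 (α t : ℝ) : ℝ := ∑' k : ℕ, ((k : ℝ) + 1) * jcf α (k + 1) * t ^ k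

noncomputable def jG2 (α t : ℝ) : ℝ :=
  ∑' k : ℕ, ((k : ℝ) + 1) * (((k + 1 : ℕ) : ℝ) + 1) * jcf α (k + 1 + 1) * t ^ k

lemma jG_deriv (α : ℝ) (hα : -1 < α) (t : ℝ) : HasDerivAt (jG α) (jG1 α t) t :=
  ps_deriv (jcf α) (jcf_sum α hα) t

lemma jG1_deriv (α : ℝ) (hα : -1 < α) (t : ℝ) : HasDerivAt (jG1 α) (jG2 α t) t := by
  have := ps_deriv (fun k : ℕ => ((k : ℝ) + 1) * jcf α (k + 1)) (ps_summable _ (jcf_sum α hα)) t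
  convert! this using 1
  unfold jG2
  apply tsum_congr; intro k; ring

lemma jG_ode (α : ℝ) (hα : -1 < α) (t : ℝ) : t * jG2 α t + (α + 1) * jG1 α t = - jG α t := by
  have s0 := ps_summable' _ (jcf_sum α hα) t
  have s1 := ps_summable' _ (ps_summable _ (jcf_sum α hα)) t
  have s2 := ps_summable' _ (ps_summable _ (ps_summable _ (jcf_sum α hα))) t
  have e2 : t * jG2 α t = ∑' k : ℕ, (k : ℝ) * ((k : ℝ) + 1) * jcf α (k + 1) * t ^ k := by
    have hs : Summable (fun k : ℕ => (k : ℝ) * ((k : ℝ) + 1) * jcf α (k + 1) * t ^ k) := by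
      rw [← summable_nat_add_iff 1]
      refine (s2.mul_left t).congr fun k => ?_
      push_cast
      ring
    rw [hs.tsum_eq_zero_add, jG2, ← tsum_mul_left]
    simp only [Nat.cast_zero, zero_mul, zero_add]
    apply tsum_congr
    intro k
    push_cast
    ring
  have hs : Summable (fun k : ℕ => (k : ℝ) * ((k : ℝ) + 1) * jcf α (k + 1) * t ^ k) := by
    rw [← summable_nat_add_iff 1]
    refine (s2.mul_left t).congr fun k => ?_
    push_cast
    ring
  rw [e2, jG1, ← tsum_mul_left, ← hs.tsum_add (s1.mul_left _), jG, ← tsum_neg]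
  apply tsum_congr
  intro k
  rw [jcf, jb_succ, pow_succ]
  have h1 : (k : ℝ) + 1 ≠ 0 := by positivity
  have h2 : α + 1 + k ≠ 0 := by have := Nat.cast_nonneg (α := ℝ) k; linarith
  field_simp
  ring

lemma jG_zero (α : ℝ) : jG α 0 = 1 := by
  rw [jG, tsum_eq_single 0]
  · simp [jb]
  · intro k hk; simp [hk]

lemma jG_cont (α : ℝ) (hα : -1 < α) : Continuous (jG α) :=
  continuous_iff_continuousAt.2 fun t => (jG_deriv α hα t).continuousAt

lemma jG_pos (α : ℝ) (hα : -1 < α) (t0 : ℝ) (h : ∀ t, 0 < t → t < t0 → jG α t ≠ 0) :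
    ∀ t, 0 ≤ t → t < t0 → 0 < jG α t := by
  intro t ht htt
  by_contra hn
  push Not at hn
  obtain ⟨x, hx, hx0⟩ := intermediate_value_Icc' ht (jG_cont α hα).continuousOn
    (show (0 : ℝ) ∈ Set.Icc (jG α t) (jG α 0) from ⟨hn, by rw [jG_zero]; norm_num⟩)
  have hx1 : x ≠ 0 := by
    rintro rfl
    rw [jG_zero] at hx0; norm_num at hx0
  exact h x (lt_of_le_of_ne hx.1 hx1.symm) (hx.2.trans_lt htt) hx0

lemma jG1_neg (α : ℝ) (hα : -1 < α) (t0 : ℝ) (ht0 : 0 < t0) (h : ∀ t, 0 ≤ t → t < t0 → 0 < jG α t) :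
    jG1 α t0 < 0 := by
  have hc1 : Continuous (jG1 α) :=
    continuous_iff_continuousAt.2 fun t => (jG1_deriv α hα t).continuousAt
  have hd : ∀ t, 0 < t → HasDerivAt (fun t => t ^ (α + 1) * jG1 α t) (- (t ^ α * jG α t)) t := by
    intro t ht
    have := (Real.hasDerivAt_rpow_const (p := α + 1) (Or.inl ht.ne')).mul (jG1_deriv α hα t)
    convert! this using 1
    rw [← mul_neg, ← jG_ode α hα t, add_sub_cancel_right, Real.rpow_add ht, Real.rpow_one]
    ring
  have ha : StrictAntiOn (fun t => t ^ (α + 1) * jG1 α t) (Set.Icc 0 t0) := by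
    apply strictAntiOn_of_deriv_neg (convex_Icc 0 t0)
    · exact ((Real.continuous_rpow_const (by linarith)).mul hc1).continuousOn
    · intro t ht
      rw [interior_Icc] at ht
      rw [(hd t ht.1).deriv]
      have := h t ht.1.le ht.2
      have := Real.rpow_pos_of_pos ht.1 α
      nlinarith [mul_pos this (h t ht.1.le ht.2)]
  have := ha (Set.left_mem_Icc.2 ht0.le) (Set.right_mem_Icc.2 ht0.le) ht0
  simp only at this
  rw [Real.zero_rpow (by linarith), zero_mul] at this
  have hp := Real.rpow_pos_of_pos ht0 (α + 1)
  by_contra hcon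
  push Not at hcon
  nlinarith [mul_nonneg hp.le hcon]

lemma jG_sign (α : ℝ) (hα : -1 < α) (t0 : ℝ) (ht0 : 0 < t0) (h0 : jG α t0 = 0)
    (h : ∀ t, 0 ≤ t → t < t0 → 0 < jG α t) (ε : ℝ) (hε : 0 < ε) :
    ∃ t1, t0 < t1 ∧ t1 < t0 + ε ∧ jG α t1 < 0 := by
  have hn := jG1_neg α hα t0 ht0 h
  have hs := (hasDerivAt_iff_tendsto_slope.1 (jG_deriv α hα t0))
  have hs' : Tendsto (slope (jG α) t0) (nhdsWithin t0 (Set.Ioi t0)) (nhds (jG1 α t0)) :=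
    hs.mono_left (nhdsWithin_mono _ (fun x hx => ne_of_gt hx))
  have e1 := hs'.eventually (gt_mem_nhds hn)
  have e2 : ∀ᶠ x in nhdsWithin t0 (Set.Ioi t0), x ∈ Set.Ioo t0 (t0 + ε) :=
    Ioo_mem_nhdsGT (by linarith)
  obtain ⟨x, hx1, hx2⟩ := (e1.and e2).exists
  refine ⟨x, hx2.1, hx2.2, ?_⟩
  rw [slope_def_field, h0, sub_zero] at hx1
  have : 0 < x - t0 := by linarith [hx2.1]
  by_contra hcon
  push Not at hcon
  exact absurd hx1 (not_lt.2 (div_nonneg hcon this.le))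

lemma besselG_eq (α : ℝ) (hα : -1 < α) (z : ℝ) :
    besselG α (z : ℂ) = ((jG α (z ^ 2 / 4) / Real.Gamma (α + 1) : ℝ) : ℂ) := by
  have g1 := (Real.Gamma_pos_of_pos (show 0 < α + 1 by linarith)).ne'
  rw [besselG, jG, ← tsum_div_const, Complex.ofReal_tsum]
  apply tsum_congr
  intro k
  rw [jb_eq α hα]
  have : Complex.Gamma ((k : ℂ) + (α : ℂ) + 1) = ((Real.Gamma (α + 1 + k) : ℝ) : ℂ) := by
    rw [← Complex.Gamma_ofReal]; congr 1; push_cast; ring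
  rw [this, pow_mul]
  have g2 := (Real.Gamma_pos_of_pos (show 0 < α + 1 + k by have := Nat.cast_nonneg (α := ℝ) k; linarith)).ne'
  have e : (-1) ^ k * (Real.Gamma (α + 1) / (k.factorial * Real.Gamma (α + 1 + k))) * (z ^ 2 / 4) ^ k / Real.Gamma (α + 1)
     = (-1) ^ k / (k.factorial * Real.Gamma (α + 1 + k)) * ((z / 2) ^ 2) ^ k := by
    rw [show (z / 2) ^ 2 = z ^ 2 / 4 by ring]
    field_simp
  rw [e]
  push_cast
  rfl

noncomputable def jd (α β : ℝ) (j n : ℕ) : ℝ := je α β n j * (jb α j * 2⁻¹ ^ j * j.factorial)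

noncomputable def jcc (α β : ℝ) (j : ℕ) (Ms : ℕ → ℝ) (n i : ℕ) : ℝ :=
  (Ms n * jd α β j n / (1 + Ms n * kernK α β j j (n - 1) 1 1)) * (jd α β j i * jR α β i)

lemma sobQ_eval (α β : ℝ) (hα : -1 < α) (hβ : -1 < β) (j : ℕ) (Ms : ℕ → ℝ) (n : ℕ) (hn : 1 ≤ n) (u : ℝ) :
    (sobQ α β j Ms n).eval (1 + 2 * u) =
      jA α n * (jh α β n u - ∑ i ∈ Finset.range n, jcc α β j Ms n i * jh α β i u) := by
  rw [sobQ, eval_sub, eval_mul, eval_C, jacobiP_eval α β hα hβ, kernKPoly, eval_finsetSum,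
    Nat.sub_add_cancel hn, mul_sub, Finset.mul_sum, Finset.mul_sum, jacobiP_deriv α β hα hβ]
  congr 1
  apply Finset.sum_congr rfl
  intro i _
  rw [eval_mul, eval_C, jacobiP_eval α β hα hβ, jacobiP_deriv α β hα hβ, jcc, jd, jd, jR]
  ring

lemma kern_nonneg (α β : ℝ) (j n : ℕ) : 0 ≤ kernK α β j j n 1 1 := by
  apply Finset.sum_nonneg
  intro i _
  exact div_nonneg (mul_self_nonneg _) (normSq_nonneg α β i)

lemma jd_nonneg (α β : ℝ) (hα : -1 < α) (hβ : -1 < β) (j n : ℕ) : 0 ≤ jd α β j n := by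
  have := je_nonneg α β hα hβ n j
  have := jb_pos α hα j
  unfold jd; positivity

lemma jcc_nonneg (α β : ℝ) (hα : -1 < α) (hβ : -1 < β) (j : ℕ) (Ms : ℕ → ℝ) (hMs : ∀ n, 0 ≤ Ms n) (n i : ℕ) :
    0 ≤ jcc α β j Ms n i := by
  have := hMs n
  have := kern_nonneg α β j (n - 1)
  have := jd_nonneg α β hα hβ j n
  have := jd_nonneg α β hα hβ j i
  have := jR_nonneg α β i
  unfold jcc; positivity

lemma jcc_le (α β : ℝ) (hα : -1 < α) (hβ : -1 < β) (j : ℕ) (Ms : ℕ → ℝ) (hMs : ∀ n, 0 ≤ Ms n) (n i : ℕ)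
    (hi : i ≤ n) :
    jcc α β j Ms n i ≤ Ms n * jd α β j n ^ 2 * jR α β i := by
  have h1 := hMs n
  have h2 := kern_nonneg α β j (n - 1)
  have h3 := jd_nonneg α β hα hβ j n
  have h4 := jd_nonneg α β hα hβ j i
  have h5 := jR_nonneg α β i
  have h6 : jd α β j i ≤ jd α β j n := by
    have := jb_pos α hα j
    have := je_mono α β hα hβ i n j hi
    unfold jd; gcongr
  have h7 : Ms n * jd α β j n / (1 + Ms n * kernK α β j j (n - 1) 1 1) ≤ Ms n * jd α β j n :=
    div_le_self (by positivity) (by nlinarith [mul_nonneg h1 h2])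
  unfold jcc
  calc _ ≤ (Ms n * jd α β j n) * (jd α β j n * jR α β i) := by gcongr
    _ = _ := by ring

lemma jS_lim (α β : ℝ) (hα : -1 < α) (hβ : -1 < β) (j : ℕ) (Ms : ℕ → ℝ) (hMs : ∀ n, 0 ≤ Ms n)
    (γ M : ℝ) (hlim : Tendsto (fun n : ℕ => Ms n * (n : ℝ) ^ γ) atTop (nhds M))
    (hγ : 2 * (α + 2 * j + 1) < γ) :
    Tendsto (fun n => ∑ i ∈ Finset.range n, jcc α β j Ms n i) atTop (nhds 0) := by
  obtain ⟨κ, hκ⟩ := jR_sum α β hα hβ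
  set q : ℝ := jb α j * 2⁻¹ ^ j * j.factorial with hq
  have hq0 : 0 < q := by have := jb_pos α hα j; positivity
  have hD := jD_pos α β
  have hb : Tendsto (fun n : ℕ => (Ms n * (n : ℝ) ^ γ) * (n : ℝ) ^ (-(γ - 2 * (α + 2 * j + 1))) *
      ((jD α β ^ j * q) ^ 2 * (jR α β 0 * (n : ℝ) ^ (-(2 * α + 2)) + κ * (jT α β n / (n : ℝ) ^ (2 * α + 2)))))
      atTop (nhds 0) := by
    have t1 := (tendsto_rpow_neg_atTop (show 0 < γ - 2 * (α + 2 * j + 1) by linarith)).comp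
      (tendsto_natCast_atTop_atTop (R := ℝ))
    have t2 := (tendsto_rpow_neg_atTop (show 0 < 2 * α + 2 by linarith)).comp
      (tendsto_natCast_atTop_atTop (R := ℝ))
    have t3 := jT_lim α β hα hβ
    have := (hlim.mul t1).mul (((t2.const_mul (jR α β 0)).add (t3.const_mul κ)).const_mul ((jD α β ^ j * q) ^ 2))
    simpa using this
  refine tendsto_of_tendsto_of_tendsto_of_le_of_le' tendsto_const_nhds hb
    (Eventually.of_forall fun n => Finset.sum_nonneg fun i _ => jcc_nonneg α β hα hβ j Ms hMs n i) ?_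
  filter_upwards [eventually_ge_atTop 1] with n hn
  have hn0 : (0 : ℝ) < n := by exact_mod_cast hn
  have h1 : ∑ i ∈ Finset.range n, jcc α β j Ms n i ≤ Ms n * jd α β j n ^ 2 * (jR α β 0 + κ * jT α β n) := by
    refine (Finset.sum_le_sum fun i hi => jcc_le α β hα hβ j Ms hMs n i (Finset.mem_range.1 hi).le).trans ?_
    rw [← Finset.mul_sum]
    exact mul_le_mul_of_nonneg_left (hκ n) (mul_nonneg (hMs n) (sq_nonneg _))
  have h2 : jd α β j n ≤ (jD α β * (n : ℝ) ^ 2) ^ j * q := by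
    unfold jd
    have := je_le α β hα hβ n j
    gcongr
  have hnn : 0 ≤ jR α β 0 + κ * jT α β n :=
    (Finset.sum_nonneg fun i _ => jR_nonneg α β i).trans (hκ n)
  have h3 : Ms n * jd α β j n ^ 2 * (jR α β 0 + κ * jT α β n) ≤
     Ms n * ((jD α β * (n : ℝ) ^ 2) ^ j * q) ^ 2 * (jR α β 0 + κ * jT α β n) := by
    have := hMs n
    have := jd_nonneg α β hα hβ j n
    gcongr
  refine (h1.trans h3).trans (le_of_eq ?_)
  have e1 : (n : ℝ) ^ (-(γ - 2 * (α + 2 * j + 1))) =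
      ((n : ℝ) ^ γ)⁻¹ * ((n : ℝ) ^ (2 * α + 2) * (((n : ℝ) ^ 2) ^ j) ^ 2) := by
    rw [← Real.rpow_neg hn0.le, ← pow_mul, ← pow_mul, ← Real.rpow_natCast, ← Real.rpow_add hn0,
      ← Real.rpow_add hn0]
    congr 1; push_cast; ring
  have p1 : (n : ℝ) ^ γ ≠ 0 := by positivity
  have p2 : (n : ℝ) ^ (2 * α + 2) ≠ 0 := by positivity
  rw [e1, Real.rpow_neg hn0.le (2 * α + 2), mul_pow (jD α β)]
  generalize (n : ℝ) ^ γ = A at *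
  generalize (n : ℝ) ^ (2 * α + 2) = B at *
  field_simp

/-- The rescaled polynomial is positive for `u ≥ 0` once the weights are small. -/
lemma jF_pos (α β : ℝ) (hα : -1 < α) (hβ : -1 < β) (j : ℕ) (Ms : ℕ → ℝ) (hMs : ∀ n, 0 ≤ Ms n) (n : ℕ)
    (hS : ∑ i ∈ Finset.range n, jcc α β j Ms n i < 1) (u : ℝ) (hu : 0 ≤ u) :
    0 < jh α β n u - ∑ i ∈ Finset.range n, jcc α β j Ms n i * jh α β i u := by
  have h1 : 1 ≤ jh α β n u := by
    rw [jh, Finset.sum_range_succ']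
    have : 0 ≤ ∑ k ∈ Finset.range n, je α β n (k + 1) * jb α (k + 1) * u ^ (k + 1) := by
      refine Finset.sum_nonneg fun k _ => ?_
      have := je_nonneg α β hα hβ n (k + 1)
      have := jb_pos α hα (k + 1)
      positivity
    simp [je, jb] at this ⊢
    linarith
  have h2 : ∑ i ∈ Finset.range n, jcc α β j Ms n i * jh α β i u ≤
      (∑ i ∈ Finset.range n, jcc α β j Ms n i) * jh α β n u := by
    rw [Finset.sum_mul]
    refine Finset.sum_le_sum fun i hi => ?_
    have h3 := jh_abs_le α β hα hβ i n (Finset.mem_range.1 hi).le u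
    rw [abs_of_nonneg hu] at h3
    exact mul_le_mul_of_nonneg_left ((le_abs_self _).trans h3) (jcc_nonneg α β hα hβ j Ms hMs n i)
  nlinarith

lemma jF_close (α β : ℝ) (hα : -1 < α) (hβ : -1 < β) (j : ℕ) (Ms : ℕ → ℝ) (hMs : ∀ n, 0 ≤ Ms n) (n : ℕ)
    (hn : 1 ≤ n) (t T : ℝ) (ht : |t| ≤ T) :
    |(jh α β n (-t / (n : ℝ) ^ 2) - ∑ i ∈ Finset.range n, jcc α β j Ms n i * jh α β i (-t / (n : ℝ) ^ 2)) - jG α t|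
      ≤ jdel α β T n + (∑ i ∈ Finset.range n, jcc α β j Ms n i) * ∑' k, jb α k * (jD α β * T) ^ k := by
  have h1 := jh_close α β hα hβ n hn t T ht
  have h2 : |∑ i ∈ Finset.range n, jcc α β j Ms n i * jh α β i (-t / (n : ℝ) ^ 2)| ≤
      (∑ i ∈ Finset.range n, jcc α β j Ms n i) * ∑' k, jb α k * (jD α β * T) ^ k := by
    rw [Finset.sum_mul]
    refine (Finset.abs_sum_le_sum_abs _ _).trans (Finset.sum_le_sum fun i hi => ?_)
    have hc := jcc_nonneg α β hα hβ j Ms hMs n i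
    rw [abs_mul, abs_of_nonneg hc]
    exact mul_le_mul_of_nonneg_left ((jh_abs_le α β hα hβ i n (Finset.mem_range.1 hi).le _).trans
      (jh_le_B α β hα hβ n hn t T ht)) hc
  rw [abs_le] at *
  constructor <;> linarith [h1.1, h1.2, h2.1, h2.2]

lemma jerr_lim (α β : ℝ) (hα : -1 < α) (hβ : -1 < β) (j : ℕ) (Ms : ℕ → ℝ)
    (hS : Tendsto (fun n => ∑ i ∈ Finset.range n, jcc α β j Ms n i) atTop (nhds 0)) (T : ℝ) (hT : 0 ≤ T) :
    Tendsto (fun n => jdel α β T n + (∑ i ∈ Finset.range n, jcc α β j Ms n i) *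
      ∑' k, jb α k * (jD α β * T) ^ k) atTop (nhds 0) := by
  have := (jdel_lim α β hα hβ T hT).add (hS.mul_const (∑' k, jb α k * (jD α β * T) ^ k))
  simpa using this

/-- for `γ > 2(α+2j+1)`, the scaled largest zero of `Q_n` tends to the
first positive zero of the Bessel function `J_α`. -/
theorem sobQ_scaled_largest_zero_tendsto (α β : ℝ) (hα : -1 < α) (hβ : -1 < β) (j : ℕ)
    (hj : 1 ≤ j) (γ M : ℝ) (hM : 0 < M) (Ms : ℕ → ℝ) (hMs : ∀ n, 0 ≤ Ms n)
    (hlim : Filter.Tendsto (fun n : ℕ => Ms n * (n : ℝ) ^ γ) Filter.atTop (nhds M))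
    (hγ : 2 * (α + 2 * j + 1) < γ) (s : ℝ) (hs : 0 < s)
    (hs0 : besselG α (s : ℂ) = 0)
    (hsmin : ∀ t : ℝ, 0 < t → t < s → besselG α (t : ℂ) ≠ 0)
    (y : ℕ → ℝ)
    (hy : ∀ n, 1 ≤ n → IsGreatest {x : ℝ | (sobQ α β j Ms n).eval x = 0} (y n)) :
    Filter.Tendsto (fun n : ℕ => (n : ℝ) * Real.sqrt (2 * (1 - y n)))
      Filter.atTop (nhds s) := by
  have hS := jS_lim α β hα hβ j Ms hMs γ M hlim hγ
  have hG0 : jG α (s ^ 2 / 4) = 0 := by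
    rw [besselG_eq α hα] at hs0
    have h := Complex.ofReal_eq_zero.1 hs0
    have g1 := (Real.Gamma_pos_of_pos (show 0 < α + 1 by linarith)).ne'
    exact (div_eq_zero_iff.1 h).resolve_right g1
  set t0 : ℝ := s ^ 2 / 4 with ht0
  have ht0p : 0 < t0 := by positivity
  have hGne : ∀ t, 0 < t → t < t0 → jG α t ≠ 0 := by
    intro t htp htt hcon
    have hsq : Real.sqrt t ^ 2 = t := Real.sq_sqrt htp.le
    have hlt : 2 * Real.sqrt t < s := by
      have : Real.sqrt t < s / 2 := by
        rw [Real.sqrt_lt' (by positivity)]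
        rw [ht0] at htt; linarith [show (s / 2) ^ 2 = s ^ 2 / 4 by ring]
      linarith
    refine hsmin (2 * Real.sqrt t) (by have := Real.sqrt_pos.2 htp; linarith) hlt ?_
    rw [besselG_eq α hα, show (2 * Real.sqrt t) ^ 2 / 4 = t by rw [mul_pow, hsq]; ring, hcon]
    simp
  have hGpos := jG_pos α hα t0 hGne
  have hkey : Tendsto (fun n : ℕ => (n : ℝ) ^ 2 * (1 - y n) / 2) atTop (nhds t0) := by
    rw [tendsto_order]
    have hSlt : ∀ᶠ n in atTop, ∑ i ∈ Finset.range n, jcc α β j Ms n i < 1 :=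
      hS.eventually (gt_mem_nhds one_pos)
    constructor
    · intro a ha
      set a' := max a 0 with ha'
      have ha'0 : 0 ≤ a' := le_max_right _ _
      have ha't : a' < t0 := max_lt ha ht0p
      obtain ⟨x0, hx0, hmin⟩ := (isCompact_Icc (a := (0 : ℝ)) (b := a')).exists_isMinOn
        ⟨0, Set.left_mem_Icc.2 ha'0⟩ (jG_cont α hα).continuousOn
      have hm := hGpos x0 hx0.1 (hx0.2.trans_lt ha't)
      have herr := (jerr_lim α β hα hβ j Ms hS a' ha'0).eventually (gt_mem_nhds hm)
      filter_upwards [hSlt, herr, eventually_ge_atTop 1] with n h1 h2 hn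
      have hn0 : (0 : ℝ) < n := by exact_mod_cast hn
      by_contra hcon
      push Not at hcon
      have hz : (sobQ α β j Ms n).eval (y n) = 0 := (hy n hn).1
      have hA := jA_pos α hα n
      rcases le_or_gt 1 (y n) with hy1 | hy1
      · rw [show y n = 1 + 2 * ((y n - 1) / 2) by ring, sobQ_eval α β hα hβ j Ms n hn] at hz
        have := jF_pos α β hα hβ j Ms hMs n h1 ((y n - 1) / 2) (by linarith)
        exact (mul_pos hA this).ne' hz
      · set t := (n : ℝ) ^ 2 * (1 - y n) / 2 with ht
        have htp : 0 ≤ t := by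
          have : 0 < 1 - y n := by linarith
          positivity
        have hta : t ≤ a' := hcon.trans (le_max_left _ _)
        have he : y n = 1 + 2 * (-t / (n : ℝ) ^ 2) := by
          rw [ht]; field_simp; ring
        rw [he, sobQ_eval α β hα hβ j Ms n hn] at hz
        have hc := jF_close α β hα hβ j Ms hMs n hn t a' (by rwa [abs_of_nonneg htp])
        rw [(mul_eq_zero.1 hz).resolve_left hA.ne', zero_sub, abs_neg] at hc
        have hx : jG α x0 ≤ jG α t := hmin ⟨htp, hta⟩
        have := le_abs_self (jG α t)
        linarith
    · intro a ha
      obtain ⟨t1, h01, h1a, hneg⟩ := jG_sign α hα t0 ht0p hG0 hGpos (a - t0) (by linarith)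
      have ht1 : 0 < t1 := by linarith
      have herr := (jerr_lim α β hα hβ j Ms hS t1 ht1.le).eventually (gt_mem_nhds (neg_pos.2 hneg))
      filter_upwards [hSlt, herr, eventually_ge_atTop 1] with n h1 h2 hn
      have hn0 : (0 : ℝ) < n := by exact_mod_cast hn
      have hA := jA_pos α hα n
      have hc := jF_close α β hα hβ j Ms hMs n hn t1 t1 (by rw [abs_of_nonneg ht1.le])
      have hQ1 : (sobQ α β j Ms n).eval (1 + 2 * (-t1 / (n : ℝ) ^ 2)) ≤ 0 := by
        rw [sobQ_eval α β hα hβ j Ms n hn]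
        refine mul_nonpos_of_nonneg_of_nonpos hA.le ?_
        have := (abs_le.1 hc).2
        linarith
      have hQ2 : 0 ≤ (sobQ α β j Ms n).eval 1 := by
        rw [show (1 : ℝ) = 1 + 2 * 0 by ring, sobQ_eval α β hα hβ j Ms n hn]
        exact (mul_pos hA (jF_pos α β hα hβ j Ms hMs n h1 0 le_rfl)).le
      have hle : 1 + 2 * (-t1 / (n : ℝ) ^ 2) ≤ 1 := by
        have : 0 ≤ t1 / (n : ℝ) ^ 2 := by positivity
        rw [neg_div]; linarith
      obtain ⟨x, hx, hx0⟩ := intermediate_value_Icc hle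
        (Polynomial.continuous (sobQ α β j Ms n)).continuousOn (show (0 : ℝ) ∈ Set.Icc _ _ from ⟨hQ1, hQ2⟩)
      have hxy : x ≤ y n := (hy n hn).2 hx0
      have h3 : 1 - y n ≤ 2 * (t1 / (n : ℝ) ^ 2) := by
        have := hx.1
        rw [neg_div] at this; linarith
      have h4 : (n : ℝ) ^ 2 * (1 - y n) / 2 ≤ t1 := by
        calc (n : ℝ) ^ 2 * (1 - y n) / 2 ≤ (n : ℝ) ^ 2 * (2 * (t1 / (n : ℝ) ^ 2)) / 2 := by gcongr
          _ = t1 := by field_simp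
      linarith
  have hfin := (Real.continuous_sqrt.tendsto (4 * t0)).comp (hkey.const_mul 4)
  have hs' : Real.sqrt (4 * t0) = s := by
    rw [ht0, show 4 * (s ^ 2 / 4) = s ^ 2 by ring, Real.sqrt_sq hs.le]
  rw [hs'] at hfin
  refine hfin.congr fun n => ?_
  simp only [Function.comp]
  rw [show 4 * ((n : ℝ) ^ 2 * (1 - y n) / 2) = (n : ℝ) ^ 2 * (2 * (1 - y n)) by ring,
    Real.sqrt_mul (sq_nonneg _), Real.sqrt_sq (Nat.cast_nonneg n)]
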